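/- arXiv:1006.1523 — 3 statements merged into one kernel-verified Lean document; each statement's English description precedes it below -/
import Mathlib

section
/- Let μ = N(0, Q) be a centered nondegenerate Gaussian measure on a separable Hilbert space H with covariance Q having eigenvalues λ_k with eigenvectors e_k, and let 0 ≤ α ≤ 1. Then for every φ in the Sobolev space W^{1,2}_α(H, μ), the Poincaré inequality ∫_H (φ − φ̄)² dμ ≤ λ₁^α ∫_H |Q^{(1−α)/2}Dφ|² dμ holds, where φ̄ = ∫_H φ dμ and λ₁ is the largest eigenvalue of Q. -/
open MeasureTheory Filter
open scoped RealInnerProductSpace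

set_option linter.unusedSectionVars false

namespace GP
open ProbabilityTheory

variable {E : Type*} [NormedAddCommGroup E] [NormedSpace ℝ E] [CompleteSpace E]
  [MeasurableSpace E] [BorelSpace E] [SecondCountableTopology E]

lemma psd_pow {ι : Type*} (B : StrongDual ℝ E →L[ℝ] StrongDual ℝ E →L[ℝ] ℝ)
    (hsymm : ∀ L M, B L M = B M L) (hpos : ∀ L, 0 ≤ B L L)
    (s : Finset ι) (a : ι → ℝ) (L : ι → StrongDual ℝ E) (n : ℕ) :
    0 ≤ ∑ i ∈ s, ∑ j ∈ s, a i * a j * (B (L i) (L j)) ^ n := by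
  have hA : (Matrix.of (fun i j : s => B (L i) (L j))).PosSemidef := by
    rw [Matrix.posSemidef_iff_dotProduct_mulVec]
    refine ⟨?_, fun x => ?_⟩
    · ext i j
      simp [hsymm]
    · have := hpos (∑ i : s, x i • L i)
      simp only [map_sum, map_smul, sum_apply, FunLike.coe_smul,
        Pi.smul_apply, smul_eq_mul] at this
      convert! this using 1
      simp [dotProduct, Matrix.mulVec, Finset.mul_sum]
      rw [Finset.sum_comm]
      refine Finset.sum_congr rfl fun i _ => Finset.sum_congr rfl fun j _ => ?_
      ring
  have hn : ∀ n : ℕ, (Matrix.of (fun i j : s => (B (L i) (L j)) ^ n)).PosSemidef := by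
    intro n
    induction n with
    | zero =>
      have := Matrix.posSemidef_vecMulVec_self_star (fun _ : s => (1:ℝ))
      convert! this using 1
      ext i j; simp [Matrix.vecMulVec]
    | succ n ih =>
      have := ih.hadamard hA
      convert! this using 1
  have := (hn n).dotProduct_mulVec_nonneg (fun i : s => a i)
  convert! this using 1
  rw [← Finset.sum_coe_sort]
  simp only [dotProduct, Matrix.mulVec, Finset.mul_sum]
  refine Finset.sum_congr rfl fun i _ => ?_
  rw [← Finset.sum_coe_sort]
  refine Finset.sum_congr rfl fun j _ => ?_
  simp; ring

lemma psd_exp {ι : Type*} (B : StrongDual ℝ E →L[ℝ] StrongDual ℝ E →L[ℝ] ℝ)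
    (hsymm : ∀ L M, B L M = B M L) (hpos : ∀ L, 0 ≤ B L L)
    (s : Finset ι) (a : ι → ℝ) (L : ι → StrongDual ℝ E) (c : ℝ) (hc0 : 0 ≤ c) (hc1 : c ≤ 1) :
    0 ≤ ∑ i ∈ s, ∑ j ∈ s, a i * a j *
      (c * (Real.exp (B (L i) (L j)) - 1) - (Real.exp (c * B (L i) (L j)) - 1)) := by
  have key : ∀ t : ℝ, HasSum (fun n : ℕ => (c - c ^ (n+1)) / ((n+1).factorial : ℝ) * t ^ (n+1))
      (c * (Real.exp t - 1) - (Real.exp (c * t) - 1)) := by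
    intro t
    have h : ∀ u : ℝ, HasSum (fun n : ℕ => u ^ (n+1) / ((n+1).factorial : ℝ)) (Real.exp u - 1) := by
      intro u
      have := NormedSpace.expSeries_div_hasSum_exp (𝔸 := ℝ) u
      rw [← Real.exp_eq_exp_ℝ] at this
      rw [← hasSum_nat_add_iff' 1] at this
      simpa using this
    have := ((h t).mul_left c).sub (h (c * t))
    convert! this using 2 with n
    rw [mul_pow]; ring
  have hs : HasSum (fun n : ℕ => ∑ i ∈ s, ∑ j ∈ s, a i * a j *
      ((c - c ^ (n+1)) / ((n+1).factorial : ℝ) * (B (L i) (L j)) ^ (n+1)))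
      (∑ i ∈ s, ∑ j ∈ s, a i * a j *
      (c * (Real.exp (B (L i) (L j)) - 1) - (Real.exp (c * B (L i) (L j)) - 1))) :=
    hasSum_sum fun i _ => hasSum_sum fun j _ => (key _).mul_left _
  refine hs.nonneg fun n => ?_
  have h1 := psd_pow B hsymm hpos s a L (n+1)
  have h2 : 0 ≤ (c - c ^ (n+1)) / ((n+1).factorial : ℝ) := by
    apply div_nonneg _ (by positivity)
    have := pow_le_of_le_one hc0 hc1 (n := n+1) (by simp)
    linarith
  convert! mul_nonneg h2 h1 using 1
  simp only [Finset.mul_sum]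
  refine Finset.sum_congr rfl fun i _ => Finset.sum_congr rfl fun j _ => ?_
  ring

variable (μ : Measure E) [IsGaussian μ]

local notation "C" => covarianceBilinDual

lemma map_eq (hμ : ∀ L : StrongDual ℝ E, μ[L] = 0) (L : StrongDual ℝ E) :
    μ.map L = gaussianReal 0 (C μ L L).toNNReal := by
  rw [IsGaussian.map_eq_gaussianReal, hμ,
    covarianceBilinDual_self_eq_variance (IsGaussian.memLp_id μ 2 (by simp))]

lemma int_exp (hμ : ∀ L : StrongDual ℝ E, μ[L] = 0) (L : StrongDual ℝ E) :
    ∫ x, Real.exp (L x) ∂μ = Real.exp (C μ L L / 2) := by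
  have := mgf_gaussianReal (map_eq μ hμ L) 1
  simp only [mgf, one_mul] at this
  rw [this, Real.coe_toNNReal _ (covarianceBilinDual_self_nonneg _)]
  simp

lemma integrable_exp (L : StrongDual ℝ E) :
    Integrable (fun x => Real.exp (L x)) μ := by
  have h := integrable_exp_mul_gaussianReal (μ := μ[L]) (v := (Var[L; μ]).toNNReal) 1
  rw [← IsGaussian.map_eq_gaussianReal,
    integrable_map_measure (by fun_prop) (by fun_prop)] at h
  simpa [Function.comp_def] using h

lemma memLp_exp (L : StrongDual ℝ E) (c : ℝ) :
    MemLp (fun x => Real.exp (L x - c)) 2 μ := by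
  rw [memLp_two_iff_integrable_sq (by fun_prop)]
  have := (integrable_exp μ ((2:ℝ) • L)).const_mul (Real.exp (-2*c))
  convert! this using 2 with x
  rw [← Real.exp_nat_mul, ← Real.exp_add]
  congr 1; simp; ring

/-- normalized exponentials -/
noncomputable def G (L : StrongDual ℝ E) : Lp ℝ 2 μ :=
  (memLp_exp μ L (C μ L L / 2)).toLp

lemma density : (Submodule.span ℝ (Set.range (G μ))).topologicalClosure = ⊤ := by
  rw [Submodule.topologicalClosure_eq_top_iff, Submodule.eq_bot_iff]
  intro f hf
  have hf2 : MemLp f 2 μ := Lp.memLp f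
  have hf1 : Integrable f μ := hf2.integrable (by norm_num)
  have hfe : ∀ L : StrongDual ℝ E, Integrable (fun x => f x * Real.exp (L x)) μ := by
    intro L
    have := MemLp.integrable_mul hf2 (memLp_exp μ L 0)
    simpa using! this
  have horth : ∀ L : StrongDual ℝ E, ∫ x, f x * Real.exp (L x) ∂μ = 0 := by
    intro L
    have h := hf (G μ L) (Submodule.subset_span ⟨L, rfl⟩)
    rw [L2.inner_def] at h
    have h2 : ∫ x, f x * Real.exp (L x) ∂μ
        = Real.exp (C μ L L / 2) * ∫ x, ⟪(G μ L : E → ℝ) x, f x⟫ ∂μ := by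
      rw [← integral_const_mul]
      apply integral_congr_ae
      filter_upwards [(memLp_exp μ L (C μ L L / 2)).coeFn_toLp] with x hx
      simp only [G]
      rw [hx, Real.exp_sub]
      simp
      field_simp
    rw [h2, h, mul_zero]
  let p : Measure E := μ.withDensity fun x => ENNReal.ofReal (f x)
  let m : Measure E := μ.withDensity fun x => ENNReal.ofReal (-f x)
  have : IsFiniteMeasure p := isFiniteMeasure_withDensity_ofReal hf1.2
  have : IsFiniteMeasure m := isFiniteMeasure_withDensity_ofReal hf1.neg.2
  have hfm : AEMeasurable f μ := hf1.aemeasurable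
  have hpi : ∀ L : StrongDual ℝ E, Integrable (fun x => Real.exp (L x)) p := by
    intro L
    rw [integrable_withDensity_iff_integrable_smul₀' (by fun_prop) (by simp)]
    refine (hfe L).mono (by fun_prop) (ae_of_all _ fun x => ?_)
    simp only [smul_eq_mul, norm_mul]
    gcongr
    rw [ENNReal.toReal_ofReal', Real.norm_eq_abs, Real.norm_eq_abs, abs_of_nonneg (by positivity)]
    exact max_le (le_abs_self _) (abs_nonneg _)
  have hmi : ∀ L : StrongDual ℝ E, Integrable (fun x => Real.exp (L x)) m := by
    intro L
    rw [integrable_withDensity_iff_integrable_smul₀' (by fun_prop) (by simp)]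
    refine (hfe L).mono (by fun_prop) (ae_of_all _ fun x => ?_)
    simp only [smul_eq_mul, norm_mul]
    gcongr
    rw [ENNReal.toReal_ofReal', Real.norm_eq_abs, Real.norm_eq_abs, abs_of_nonneg (by positivity)]
    exact max_le (neg_le_abs _) (abs_nonneg _)
  have heq : ∀ L : StrongDual ℝ E, ∫ x, Real.exp (L x) ∂p = ∫ x, Real.exp (L x) ∂m := by
    intro L
    have h1 := hpi L
    have h2 := hmi L
    rw [integrable_withDensity_iff_integrable_smul₀' (by fun_prop) (by simp)] at h1 h2
    rw [integral_withDensity_eq_integral_toReal_smul₀ (by fun_prop) (by simp),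
      integral_withDensity_eq_integral_toReal_smul₀ (by fun_prop) (by simp), ← sub_eq_zero,
      ← integral_sub h1 h2, ← horth L]
    congr 1; ext x
    simp only [ENNReal.toReal_ofReal', smul_eq_mul, ← sub_mul]
    congr 1
    exact max_zero_sub_eq_self (f x)
  have hmgf : ∀ L : StrongDual ℝ E, mgf L p = mgf L m := by
    intro L; ext t
    simpa [mgf] using heq (t • L)
  have hpm : p = 0 ↔ m = 0 := by
    have h0 := heq 0
    simp [Measure.real, ENNReal.toReal_eq_toReal_iff'] at h0
    rw [← Measure.measure_univ_eq_zero, ← Measure.measure_univ_eq_zero, h0]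
  have hpmeq : p = m := by
    apply Measure.ext_of_charFunDual
    ext L
    have := eqOn_complexMGF_of_mgf' (hmgf L) hpm (x := Complex.I) (by
      have : integrableExpSet L p = Set.univ := by
        ext t; simpa [integrableExpSet] using hpi (t • L)
      simp [this])
    simp only [complexMGF] at this
    rw [charFunDual_apply, charFunDual_apply]
    simpa [mul_comm] using this
  have hae : f =ᵐ[μ] 0 := by
    rw [withDensity_eq_iff (by fun_prop) (by fun_prop) hf1.lintegral_lt_top.ne] at hpmeq
    filter_upwards [hpmeq] with x hx
    have := congrArg ENNReal.toReal hx
    simp only [ENNReal.toReal_ofReal'] at this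
    have h2 := max_zero_sub_eq_self (f x)
    simp only [Pi.zero_apply]; linarith
  exact Lp.eq_zero_iff_ae_eq_zero.mpr hae

variable {μ}

lemma mp_rot (hμ : ∀ L : StrongDual ℝ E, μ[L] = 0) (θ : ℝ) :
    MeasurePreserving (fun p : E × E => ContinuousLinearMap.rotation θ p) (μ.prod μ) (μ.prod μ) :=
  ⟨by fun_prop, IsGaussian.map_rotation_eq_self_of_forall_strongDual_eq_zero hμ θ⟩

lemma mp_rot1 (hμ : ∀ L : StrongDual ℝ E, μ[L] = 0) (θ : ℝ) :
    MeasurePreserving (fun p : E × E => Real.cos θ • p.1 + Real.sin θ • p.2) (μ.prod μ) μ :=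
  measurePreserving_fst.comp (mp_rot hμ θ)

lemma inner_G (hμ : ∀ L : StrongDual ℝ E, μ[L] = 0) (L M : StrongDual ℝ E) :
    ⟪G μ L, G μ M⟫ = Real.exp (C μ L M) := by
  rw [L2.inner_def]
  have : ∫ x, ⟪(G μ L : E → ℝ) x, (G μ M : E → ℝ) x⟫ ∂μ
      = ∫ x, Real.exp (- (C μ L L / 2 + C μ M M / 2)) * Real.exp ((L + M) x) ∂μ := by
    apply integral_congr_ae
    filter_upwards [(memLp_exp μ L (C μ L L / 2)).coeFn_toLp,
      (memLp_exp μ M (C μ M M / 2)).coeFn_toLp] with x hx hy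
    simp only [G]
    rw [hx, hy, ← Real.exp_add]
    simp only [RCLike.inner_apply, conj_trivial]
    rw [← Real.exp_add]
    congr 1
    simp; ring
  rw [this, integral_const_mul, int_exp μ hμ, ← Real.exp_add]
  congr 1
  have := covarianceBilinDual_comm (μ := μ) L M
  simp only [map_add, add_apply]
  linarith

/-- the constant one -/
noncomputable def one (μ : Measure E) [IsGaussian μ] : Lp ℝ 2 μ :=
  (memLp_const (1:ℝ) : MemLp (fun _ : E => (1:ℝ)) 2 μ).toLp

lemma inner_one (f : Lp ℝ 2 μ) : ⟪one μ, f⟫ = ∫ x, f x ∂μ := by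
  rw [L2.inner_def]
  apply integral_congr_ae
  filter_upwards [(memLp_const (1:ℝ) : MemLp (fun _ : E => (1:ℝ)) 2 μ).coeFn_toLp] with x hx
  simp only [one]
  rw [hx]; simp

lemma inner_one_G (hμ : ∀ L : StrongDual ℝ E, μ[L] = 0) (L : StrongDual ℝ E) :
    ⟪one μ, G μ L⟫ = 1 := by
  have : G μ 0 = one μ := by
    unfold G one
    congr 1
    ext x
    simp
  rw [← this, inner_G hμ]
  simp

/-- composition with the first projection -/
noncomputable def V1 (μ : Measure E) [IsGaussian μ] : Lp ℝ 2 μ →ₗᵢ[ℝ] Lp ℝ 2 (μ.prod μ) :=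
  Lp.compMeasurePreservingₗᵢ ℝ Prod.fst measurePreserving_fst

/-- composition with the rotation -/
noncomputable def V2 (hμ : ∀ L : StrongDual ℝ E, μ[L] = 0) (θ : ℝ) :
    Lp ℝ 2 μ →ₗᵢ[ℝ] Lp ℝ 2 (μ.prod μ) :=
  Lp.compMeasurePreservingₗᵢ ℝ _ (mp_rot1 hμ θ)

lemma V1_ae (f : E → ℝ) (hf : MemLp f 2 μ) :
    V1 μ hf.toLp =ᵐ[μ.prod μ] fun p => f p.1 :=
  (Lp.coeFn_compMeasurePreserving _ measurePreserving_fst).trans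
    (measurePreserving_fst.quasiMeasurePreserving.ae_eq_comp hf.coeFn_toLp)

lemma V2_ae (hμ : ∀ L : StrongDual ℝ E, μ[L] = 0) (θ : ℝ) (f : E → ℝ) (hf : MemLp f 2 μ) :
    V2 hμ θ hf.toLp =ᵐ[μ.prod μ] fun p => f (Real.cos θ • p.1 + Real.sin θ • p.2) :=
  (Lp.coeFn_compMeasurePreserving _ (mp_rot1 hμ θ)).trans
    ((mp_rot1 hμ θ).quasiMeasurePreserving.ae_eq_comp hf.coeFn_toLp)

lemma inner_V (hμ : ∀ L : StrongDual ℝ E, μ[L] = 0) (θ : ℝ) (L M : StrongDual ℝ E) :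
    ⟪V1 μ (G μ L), V2 hμ θ (G μ M)⟫ = Real.exp (Real.cos θ * C μ L M) := by
  rw [L2.inner_def]
  have : ∫ p, ⟪(V1 μ (G μ L) : E × E → ℝ) p, (V2 hμ θ (G μ M) : E × E → ℝ) p⟫ ∂(μ.prod μ)
      = ∫ p : E × E, (Real.exp (- (C μ L L / 2 + C μ M M / 2)) *
        Real.exp ((L + Real.cos θ • M) p.1)) * Real.exp ((Real.sin θ • M) p.2) ∂(μ.prod μ) := by
    apply integral_congr_ae
    filter_upwards [V1_ae _ (memLp_exp μ L (C μ L L / 2)),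
      V2_ae hμ θ _ (memLp_exp μ M (C μ M M / 2))] with x hx hy
    simp only [G]
    rw [hx, hy, ← Real.exp_add]
    simp only [RCLike.inner_apply, conj_trivial]
    rw [← Real.exp_add, ← Real.exp_add]
    congr 1
    simp; ring
  rw [this, integral_prod_mul (fun x => Real.exp (- (C μ L L / 2 + C μ M M / 2)) *
        Real.exp ((L + Real.cos θ • M) x)) (fun x => Real.exp ((Real.sin θ • M) x)),
    integral_const_mul, int_exp μ hμ, int_exp μ hμ, ← Real.exp_add, ← Real.exp_add]
  congr 1
  have := covarianceBilinDual_comm (μ := μ) L M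
  simp only [map_add, map_smul, add_apply, smul_apply, smul_eq_mul, ← this]
  linear_combination (C μ M M / 2) * Real.sin_sq_add_cos_sq θ

lemma gebelein (hμ : ∀ L : StrongDual ℝ E, μ[L] = 0) (θ : ℝ) (hc : 0 ≤ Real.cos θ)
    (f : Lp ℝ 2 μ) :
    ⟪V1 μ f, V2 hμ θ f⟫ ≤ Real.cos θ * ⟪f, f⟫ + (1 - Real.cos θ) * ⟪one μ, f⟫ ^ 2 := by
  have hcl : IsClosed {f : Lp ℝ 2 μ | ⟪V1 μ f, V2 hμ θ f⟫
      ≤ Real.cos θ * ⟪f, f⟫ + (1 - Real.cos θ) * ⟪one μ, f⟫ ^ 2} := by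
    have h1 := (V1 μ).continuous
    have h2 := (V2 hμ θ).continuous
    apply isClosed_le <;> fun_prop
  have hsub : ((Submodule.span ℝ (Set.range (G μ)) : Submodule ℝ (Lp ℝ 2 μ)) : Set (Lp ℝ 2 μ)) ⊆
      {f : Lp ℝ 2 μ | ⟪V1 μ f, V2 hμ θ f⟫
      ≤ Real.cos θ * ⟪f, f⟫ + (1 - Real.cos θ) * ⟪one μ, f⟫ ^ 2} := by
    intro f hf
    rw [SetLike.mem_coe, Finsupp.mem_span_range_iff_exists_finsupp] at hf
    obtain ⟨a, rfl⟩ := hf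
    simp only [Set.mem_ofPred_eq, Finsupp.sum, map_sum, map_smul, sum_inner, inner_sum,
      real_inner_smul_left, real_inner_smul_right, inner_G hμ, inner_V hμ, inner_one_G hμ]
    have := psd_exp (C μ) (fun L M => covarianceBilinDual_comm L M)
      (fun L => covarianceBilinDual_self_nonneg L) a.support a (fun L => L) (Real.cos θ) hc
      (Real.cos_le_one θ)
    rw [← sub_nonneg]
    convert! this using 1
    rw [pow_two, Finset.sum_mul_sum, Finset.mul_sum, Finset.mul_sum, ← Finset.sum_add_distrib,
      ← Finset.sum_sub_distrib]
    refine Finset.sum_congr rfl fun i _ => ?_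
    rw [Finset.mul_sum, Finset.mul_sum, ← Finset.sum_add_distrib, ← Finset.sum_sub_distrib]
    refine Finset.sum_congr rfl fun j _ => ?_
    rw [covarianceBilinDual_comm j i]
    ring
  have := closure_minimal hsub hcl
  apply this
  rw [← Submodule.topologicalClosure_coe, density]
  trivial

lemma gebelein' (hμ : ∀ L : StrongDual ℝ E, μ[L] = 0) (θ : ℝ) (hc : 0 ≤ Real.cos θ)
    (φ : E → ℝ) (hφ : MemLp φ 2 μ) :
    2 * (1 - Real.cos θ) * ∫ x, (φ x - ∫ y, φ y ∂μ) ^ 2 ∂μ ≤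
      ∫ p : E × E, (φ (Real.cos θ • p.1 + Real.sin θ • p.2) - φ p.1) ^ 2 ∂(μ.prod μ) := by
  have h := gebelein hμ θ hc hφ.toLp
  have hint : ∫ x, (hφ.toLp : Lp ℝ 2 μ) x ∂μ = ∫ x, φ x ∂μ := integral_congr_ae hφ.coeFn_toLp
  have hsq : ⟪hφ.toLp, hφ.toLp⟫ = ∫ x, φ x ^ 2 ∂μ := by
    rw [L2.inner_def]
    apply integral_congr_ae
    filter_upwards [hφ.coeFn_toLp] with x hx
    rw [hx]; simp [pow_two]
  have hvar : ∫ x, (φ x - ∫ y, φ y ∂μ) ^ 2 ∂μ = ∫ x, φ x ^ 2 ∂μ - (∫ x, φ x ∂μ) ^ 2 := by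
    rw [← variance_eq_integral hφ.aestronglyMeasurable.aemeasurable, variance_eq_sub hφ]
    simp
  have hR : ∫ p : E × E, (φ (Real.cos θ • p.1 + Real.sin θ • p.2) - φ p.1) ^ 2 ∂(μ.prod μ)
      = ⟪V2 hμ θ hφ.toLp - V1 μ hφ.toLp, V2 hμ θ hφ.toLp - V1 μ hφ.toLp⟫ := by
    rw [L2.inner_def]
    apply integral_congr_ae
    filter_upwards [V1_ae φ hφ, V2_ae hμ θ φ hφ,
      Lp.coeFn_sub (V2 hμ θ hφ.toLp) (V1 μ hφ.toLp)] with x h1 h2 h3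
    rw [h3, Pi.sub_apply, h1, h2]; simp [pow_two]
  rw [hR, hvar, inner_sub_left, inner_sub_right, inner_sub_right, LinearIsometry.inner_map_map,
    LinearIsometry.inner_map_map, real_inner_comm, hsq]
  rw [inner_one, hint, hsq, real_inner_comm] at h
  rw [real_inner_comm] at h ⊢
  linarith

lemma cs_interval (g : ℝ → ℝ) (hg : Continuous g) (θ : ℝ) (hθ : 0 < θ) :
    (∫ s in (0:ℝ)..θ, g s) ^ 2 ≤ θ * ∫ s in (0:ℝ)..θ, g s ^ 2 := by
  set I := ∫ s in (0:ℝ)..θ, g s with hI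
  have h0 : 0 ≤ ∫ s in (0:ℝ)..θ, (θ * g s - I) ^ 2 :=
    intervalIntegral.integral_nonneg hθ.le fun s _ => sq_nonneg _
  have h1 : ∫ s in (0:ℝ)..θ, (θ * g s - I) ^ 2
      = θ ^ 2 * (∫ s in (0:ℝ)..θ, g s ^ 2) - 2 * θ * I * I + θ * I ^ 2 := by
    have : ∀ s, (θ * g s - I) ^ 2 = (θ ^ 2 * g s ^ 2 - 2 * θ * I * g s) + I ^ 2 := by
      intro s; ring
    simp only [this]
    rw [intervalIntegral.integral_add, intervalIntegral.integral_sub,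
      intervalIntegral.integral_const_mul, intervalIntegral.integral_const_mul,
      intervalIntegral.integral_const, ← hI]
    · simp
    all_goals exact Continuous.intervalIntegrable (by fun_prop) _ _
  rw [h1] at h0
  have : 0 ≤ θ * (θ * (∫ s in (0:ℝ)..θ, g s ^ 2) - I ^ 2) := by linarith
  have := nonneg_of_mul_nonneg_right this hθ
  linarith

lemma pointwise (φ : E → ℝ) (hφ : ContDiff ℝ 1 φ) (θ : ℝ) (hθ : 0 < θ) (p : E × E) :
    ENNReal.ofReal ((φ (Real.cos θ • p.1 + Real.sin θ • p.2) - φ p.1) ^ 2) ≤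
      ENNReal.ofReal θ * ∫⁻ s in Set.Ioc 0 θ, ENNReal.ofReal
        ((fderiv ℝ φ (ContinuousLinearMap.rotation s p).1
          (ContinuousLinearMap.rotation s p).2) ^ 2) := by
  have hd : Continuous (fderiv ℝ φ) := hφ.continuous_fderiv (by simp)
  set g : ℝ → ℝ := fun s => fderiv ℝ φ (ContinuousLinearMap.rotation s p).1
          (ContinuousLinearMap.rotation s p).2 with hg
  have hgc : Continuous g := by
    simp only [hg, ContinuousLinearMap.rotation_apply]
    fun_prop
  have hder : ∀ s, HasDerivAt (fun s => φ (Real.cos s • p.1 + Real.sin s • p.2)) (g s) s := by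
    intro s
    have h1 : HasDerivAt (fun s => Real.cos s • p.1 + Real.sin s • p.2)
        (-Real.sin s • p.1 + Real.cos s • p.2) s :=
      ((Real.hasDerivAt_cos s).smul_const p.1).add ((Real.hasDerivAt_sin s).smul_const p.2)
    have h2 := (hφ.differentiable (by simp) (Real.cos s • p.1 + Real.sin s • p.2)).hasFDerivAt
    exact h2.comp_hasDerivAt s h1
  have hftc := intervalIntegral.integral_eq_sub_of_hasDerivAt (fun s _ => hder s)
    (hgc.intervalIntegrable 0 θ)
  simp only [Real.cos_zero, one_smul, Real.sin_zero, zero_smul, add_zero] at hftc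
  rw [← hftc, ← ofReal_integral_eq_lintegral_ofReal, ← ENNReal.ofReal_mul hθ.le,
    ← intervalIntegral.integral_of_le hθ.le]
  · exact ENNReal.ofReal_le_ofReal (cs_interval g hgc θ hθ)
  · exact (intervalIntegrable_iff_integrableOn_Ioc_of_le hθ.le).1
      (Continuous.intervalIntegrable (hgc.pow 2) _ _)
  · exact ae_of_all _ fun s => sq_nonneg _

lemma lint_sq (hμ : ∀ L : StrongDual ℝ E, μ[L] = 0) (L : StrongDual ℝ E) :
    ∫⁻ y, ENNReal.ofReal ((L y) ^ 2) ∂μ = ENNReal.ofReal (C μ L L) := by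
  have hL : MemLp L 2 μ := IsGaussian.memLp_dual μ L 2 (by simp)
  rw [← ofReal_integral_eq_lintegral_ofReal hL.integrable_sq (ae_of_all _ fun s => sq_nonneg _),
    covarianceBilinDual_self_eq_variance (IsGaussian.memLp_id μ 2 (by simp)),
    variance_eq_integral (by fun_prop), hμ]
  simp

lemma energy (hμ : ∀ L : StrongDual ℝ E, μ[L] = 0)
    (φ : E → ℝ) (hφ : ContDiff ℝ 1 φ) (θ : ℝ) (hθ : 0 < θ) :
    ∫⁻ p : E × E, ENNReal.ofReal ((φ (Real.cos θ • p.1 + Real.sin θ • p.2) - φ p.1) ^ 2)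
      ∂(μ.prod μ) ≤
      ENNReal.ofReal (θ ^ 2) * ∫⁻ x, ENNReal.ofReal (C μ (fderiv ℝ φ x) (fderiv ℝ φ x)) ∂μ := by
  have hd : Continuous (fderiv ℝ φ) := hφ.continuous_fderiv (by simp)
  have hjoint : Continuous (fun q : (E × E) × ℝ => ENNReal.ofReal
        ((fderiv ℝ φ (ContinuousLinearMap.rotation q.2 q.1).1
          (ContinuousLinearMap.rotation q.2 q.1).2) ^ 2)) := by
    simp only [ContinuousLinearMap.rotation_apply]
    refine ENNReal.continuous_ofReal.comp ?_
    fun_prop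
  have hF : Continuous (fun q : E × E => ENNReal.ofReal ((fderiv ℝ φ q.1 q.2) ^ 2)) := by
    refine ENNReal.continuous_ofReal.comp ?_
    fun_prop
  refine (lintegral_mono fun p => pointwise φ hφ θ hθ p).trans ?_
  rw [lintegral_const_mul' _ _ (by simp), lintegral_lintegral_swap hjoint.measurable.aemeasurable]
  have h1 : ∀ s : ℝ, ∫⁻ p : E × E, ENNReal.ofReal
        ((fderiv ℝ φ (ContinuousLinearMap.rotation s p).1
          (ContinuousLinearMap.rotation s p).2) ^ 2) ∂(μ.prod μ)
      = ∫⁻ x, ENNReal.ofReal (C μ (fderiv ℝ φ x) (fderiv ℝ φ x)) ∂μ := by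
    intro s
    rw [(mp_rot hμ s).lintegral_comp (f := fun q : E × E =>
      ENNReal.ofReal ((fderiv ℝ φ q.1 q.2) ^ 2)) hF.measurable,
      lintegral_prod _ hF.measurable.aemeasurable]
    simp only [lint_sq hμ]
  simp only [h1]
  rw [lintegral_const, pow_two, ENNReal.ofReal_mul hθ.le]
  simp only [MeasurableSet.univ, Measure.restrict_apply, Set.univ_inter, Real.volume_Ioc, sub_zero]
  apply le_of_eq; ring

theorem poincare (hμ : ∀ L : StrongDual ℝ E, μ[L] = 0)
    (φ : E → ℝ) (hφ : ContDiff ℝ 1 φ) (hφ2 : Integrable (fun x => φ x ^ 2) μ)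
    (hD : Integrable (fun x => C μ (fderiv ℝ φ x) (fderiv ℝ φ x)) μ) :
    ∫ x, (φ x - ∫ y, φ y ∂μ) ^ 2 ∂μ ≤ ∫ x, C μ (fderiv ℝ φ x) (fderiv ℝ φ x) ∂μ := by
  have hφc : Continuous φ := hφ.continuous
  have hm : MemLp φ 2 μ := (memLp_two_iff_integrable_sq (by fun_prop)).2 hφ2
  set V := ∫ x, (φ x - ∫ y, φ y ∂μ) ^ 2 ∂μ with hV
  set D := ∫ x, C μ (fderiv ℝ φ x) (fderiv ℝ φ x) ∂μ with hDdef
  have hV0 : 0 ≤ V := integral_nonneg fun x => sq_nonneg _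
  have hD0 : 0 ≤ D := integral_nonneg fun x => covarianceBilinDual_self_nonneg _
  have key : ∀ θ : ℝ, 0 < θ → θ ≤ 1 → V * (1 - 5 / 48 * θ ^ 2) ≤ D := by
    intro θ h0 h1
    have hcb := Real.cos_bound (x := θ) (by rw [abs_of_pos h0]; exact h1)
    rw [abs_of_pos h0] at hcb
    have hcb' := abs_le.1 hcb
    have hcos : 0 ≤ Real.cos θ := (Real.cos_pos_of_le_one (by rw [abs_of_pos h0]; exact h1)).le
    have hg := gebelein' hμ θ hcos φ hm
    have he := energy hμ φ hφ θ h0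
    rw [← ofReal_integral_eq_lintegral_ofReal hD
      (ae_of_all _ fun x => covarianceBilinDual_self_nonneg _), ← hDdef,
      ← ENNReal.ofReal_mul (by positivity)] at he
    have he2 : ∫ p : E × E, (φ (Real.cos θ • p.1 + Real.sin θ • p.2) - φ p.1) ^ 2 ∂(μ.prod μ)
        ≤ θ ^ 2 * D := by
      rw [integral_eq_lintegral_of_nonneg_ae (ae_of_all _ fun s => sq_nonneg _)
        (Continuous.aestronglyMeasurable (by fun_prop))]
      exact ENNReal.toReal_le_of_le_ofReal (by positivity) he
    have h3 : θ ^ 2 * (1 - 5 / 48 * θ ^ 2) ≤ 2 * (1 - Real.cos θ) := by nlinarith [hcb'.2]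
    have h4 : θ ^ 2 * (V * (1 - 5 / 48 * θ ^ 2)) ≤ θ ^ 2 * D := by
      calc θ ^ 2 * (V * (1 - 5 / 48 * θ ^ 2)) = (θ ^ 2 * (1 - 5 / 48 * θ ^ 2)) * V := by ring
        _ ≤ 2 * (1 - Real.cos θ) * V := by gcongr
        _ ≤ _ := hg.trans he2
    exact le_of_mul_le_mul_left h4 (by positivity)
  have ht : Tendsto (fun θ : ℝ => V * (1 - 5 / 48 * θ ^ 2)) (nhdsWithin 0 (Set.Ioi 0)) (nhds V) := by
    have : Continuous (fun θ : ℝ => V * (1 - 5 / 48 * θ ^ 2)) := by fun_prop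
    have := this.tendsto 0
    simp only [ne_eq, OfNat.ofNat_ne_zero, not_false_eq_true, zero_pow, mul_zero, sub_zero,
      mul_one] at this
    exact this.mono_left nhdsWithin_le_nhds
  refine le_of_tendsto ht ?_
  filter_upwards [Ioc_mem_nhdsGT (show (0:ℝ) < 1 by norm_num)] with θ hθ
  exact key θ hθ.1 hθ.2
end GP

/-- Gaussian Poincaré inequality in `W^{1,2}_α`: if `μ = N(0,Q)` is a centered
nondegenerate Gaussian measure on a separable Hilbert space `H`, with eigenbasis `e k` of `Q`
and eigenvalues `lam k` (with `lam 0` the largest), and `0 ≤ α ≤ 1`, then for every `C¹`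
function `φ` (a core of `W^{1,2}_α(H,μ)`) one has
`∫ (φ - φ̄)² dμ ≤ (lam 0)^α ∫ |Q^{(1-α)/2}Dφ|² dμ`. -/
theorem stmt_4
    {H : Type*} [NormedAddCommGroup H] [InnerProductSpace ℝ H] [CompleteSpace H]
    [MeasurableSpace H] [BorelSpace H] [SecondCountableTopology H]
    (μ : Measure H) [IsProbabilityMeasure μ]
    (e : ℕ → H) (hON : Orthonormal ℝ e)
    (htotal : (Submodule.span ℝ (Set.range e)).topologicalClosure = ⊤)
    (lam : ℕ → ℝ) (hlampos : ∀ k, 0 < lam k) (hsum : Summable lam)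
    (hlam1 : ∀ k, lam k ≤ lam 0)
    -- μ is the centered Gaussian measure with covariance Q, Q e k = lam k • e k
    (hGauss : ∀ h : H, Measure.map (fun x => ⟪h, x⟫) μ
      = ProbabilityTheory.gaussianReal 0 (Real.toNNReal (∑' k, lam k * ⟪h, e k⟫ ^ 2)))
    (α : ℝ) (hα0 : 0 ≤ α) (hα1 : α ≤ 1)
    (φ : H → ℝ) (hφ : ContDiff ℝ 1 φ)
    (hφint : Integrable (fun x => (φ x) ^ 2) μ)
    (hgradint : Integrable (fun x => ∑' k, lam k ^ (1 - α) * (fderiv ℝ φ x (e k)) ^ 2) μ) :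
    ∫ x, (φ x - ∫ y, φ y ∂μ) ^ 2 ∂μ
      ≤ lam 0 ^ α * ∫ x, ∑' k, lam k ^ (1 - α) * (fderiv ℝ φ x (e k)) ^ 2 ∂μ := by
  have hgd : ∀ L : StrongDual ℝ H, μ.map L
      = ProbabilityTheory.gaussianReal 0 (Real.toNNReal (∑' k, lam k * (L (e k)) ^ 2)) := by
    intro L
    have h := hGauss ((InnerProductSpace.toDual ℝ H).symm L)
    simp only [InnerProductSpace.toDual_symm_apply] at h
    exact h
  have hL0 : ∀ L : StrongDual ℝ H, ∫ x, L x ∂μ = 0 := by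
    intro L
    have h : ∫ y, y ∂(μ.map L) = ∫ x, L x ∂μ :=
      integral_map (by fun_prop) (by fun_prop)
    rw [← h, hgd, ProbabilityTheory.integral_id_gaussianReal]
  have hvar : ∀ L : StrongDual ℝ H, ProbabilityTheory.variance L μ
      = ∑' k, lam k * (L (e k)) ^ 2 := by
    intro L
    have h : ProbabilityTheory.variance id (μ.map L) = ProbabilityTheory.variance L μ := by
      rw [ProbabilityTheory.variance_map (by fun_prop) (by fun_prop)]
      rfl
    rw [← h, hgd, ProbabilityTheory.variance_id_gaussianReal, Real.coe_toNNReal]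
    exact tsum_nonneg fun k => mul_nonneg (hlampos k).le (sq_nonneg _)
  have : ProbabilityTheory.IsGaussian μ := by
    refine ⟨fun L => ?_⟩
    rw [hL0, hvar, hgd]
  have hcov : ∀ L : StrongDual ℝ H, ProbabilityTheory.covarianceBilinDual μ L L
      = ∑' k, lam k * (L (e k)) ^ 2 := by
    intro L
    rw [ProbabilityTheory.covarianceBilinDual_self_eq_variance
      (ProbabilityTheory.IsGaussian.memLp_id μ 2 (by simp)), hvar]
  have hsq : ∀ L : StrongDual ℝ H, Summable fun k => (L (e k)) ^ 2 := by
    intro L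
    have h := hON.inner_products_summable ((InnerProductSpace.toDual ℝ H).symm L)
    refine h.congr fun k => ?_
    rw [real_inner_comm, InnerProductSpace.toDual_symm_apply, Real.norm_eq_abs, sq_abs]
  have h0 : 0 < lam 0 := hlampos 0
  have hs1 : ∀ L : StrongDual ℝ H, Summable fun k => lam k * (L (e k)) ^ 2 := by
    intro L
    refine Summable.of_nonneg_of_le (fun k => mul_nonneg (hlampos k).le (sq_nonneg _))
      (fun k => ?_) ((hsq L).mul_left (lam 0))
    exact mul_le_mul_of_nonneg_right (hlam1 k) (sq_nonneg _)
  have hs2 : ∀ L : StrongDual ℝ H, Summable fun k => lam k ^ (1 - α) * (L (e k)) ^ 2 := by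
    intro L
    refine Summable.of_nonneg_of_le
      (fun k => mul_nonneg (Real.rpow_nonneg (hlampos k).le _) (sq_nonneg _))
      (fun k => ?_) ((hsq L).mul_left (lam 0 ^ (1 - α)))
    exact mul_le_mul_of_nonneg_right
      (Real.rpow_le_rpow (hlampos k).le (hlam1 k) (by linarith)) (sq_nonneg _)
  have hle : ∀ L : StrongDual ℝ H, ProbabilityTheory.covarianceBilinDual μ L L
      ≤ lam 0 ^ α * ∑' k, lam k ^ (1 - α) * (L (e k)) ^ 2 := by
    intro L
    rw [hcov, ← tsum_mul_left]
    refine (hs1 L).tsum_le_tsum (fun k => ?_) ((hs2 L).mul_left _)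
    rw [← mul_assoc]
    refine mul_le_mul_of_nonneg_right ?_ (sq_nonneg _)
    calc lam k = lam k ^ α * lam k ^ (1 - α) := by
          rw [← Real.rpow_add (hlampos k)]; simp
      _ ≤ lam 0 ^ α * lam k ^ (1 - α) :=
          mul_le_mul_of_nonneg_right (Real.rpow_le_rpow (hlampos k).le (hlam1 k) hα0)
            (Real.rpow_nonneg (hlampos k).le _)
  have hd : Continuous (fderiv ℝ φ) := hφ.continuous_fderiv (by simp)
  have hint : Integrable (fun x => ProbabilityTheory.covarianceBilinDual μ
      (fderiv ℝ φ x) (fderiv ℝ φ x)) μ := by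
    refine (hgradint.const_mul (lam 0 ^ α)).mono'
      (Continuous.aestronglyMeasurable (by fun_prop)) (ae_of_all _ fun x => ?_)
    rw [Real.norm_of_nonneg (ProbabilityTheory.covarianceBilinDual_self_nonneg _)]
    exact hle _
  refine (GP.poincare hL0 φ hφ hφint hint).trans ?_
  rw [← integral_const_mul]
  exact integral_mono hint (hgradint.const_mul _) fun x => hle _
end

section
/- Let μ = N(0, Q) be a centered Gaussian measure on a separable Hilbert space H. There exists C > 0 such that for every φ ∈ W^{1,2}_0(H, μ), ∫_H |x|² φ(x)² μ(dx) ≤ C ‖φ‖²_{W^{1,2}_0(H, μ)}. -/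
open MeasureTheory
open scoped RealInnerProductSpace

lemma aux_gauss1d (v : NNReal) (hv : v ≠ 0) (f f' : ℝ → ℝ) (hf : ∀ x, HasDerivAt f (f' x) x)
    (hc : Continuous f') (M : ℝ) (hM : ∀ x, |f x| ≤ M) (N : ℝ) (hN : ∀ x, |f' x| ≤ N) :
    ∫ t, (t ^ 2 * f t ^ 2 - 2 * v * f t ^ 2 - 4 * v ^ 2 * f' t ^ 2)
      ∂(ProbabilityTheory.gaussianReal 0 v) ≤ 0 := by
  have hv' : (0 : ℝ) < v := by positivity
  have hfc : Continuous f := continuous_iff_continuousAt.2 fun x => (hf x).continuousAt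
  set γ := ProbabilityTheory.gaussianReal 0 v with hγ
  have hid2 : Integrable (fun t : ℝ => t ^ 2) γ :=
    (ProbabilityTheory.memLp_id_gaussianReal (μ := 0) (v := v) 2).integrable_sq
  have hid1 : Integrable (fun t : ℝ => t) γ :=
    (ProbabilityTheory.memLp_id_gaussianReal (μ := 0) (v := v) 1).integrable le_rfl
  have hff : ∀ x, ‖f x ^ 2‖ ≤ M ^ 2 := fun x => by
    rw [norm_pow]; exact pow_le_pow_left₀ (norm_nonneg _) (hM x) 2
  have hff' : ∀ x, ‖f x * f' x‖ ≤ M * N := fun x => by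
    rw [norm_mul]
    exact mul_le_mul (hM x) (hN x) (norm_nonneg _) ((abs_nonneg _).trans (hM x))
  have hf'f' : ∀ x, ‖f' x ^ 2‖ ≤ N ^ 2 := fun x => by
    rw [norm_pow]; exact pow_le_pow_left₀ (norm_nonneg _) (hN x) 2
  have i1 : Integrable (fun t => f t ^ 2) γ :=
    Integrable.of_bound (by fun_prop) (M ^ 2) (ae_of_all _ hff)
  have i2 : Integrable (fun t => f' t ^ 2) γ :=
    Integrable.of_bound (by fun_prop) (N ^ 2) (ae_of_all _ hf'f')
  have i3 : Integrable (fun t => t ^ 2 * f t ^ 2) γ :=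
    hid2.mul_bdd (c := M ^ 2) (by fun_prop) (ae_of_all _ hff)
  have i4 : Integrable (fun t => t * (f t * f' t)) γ :=
    hid1.mul_bdd (c := M * N) (by fun_prop) (ae_of_all _ hff')
  have i5 : Integrable (fun t => t * f t ^ 2) γ :=
    hid1.mul_bdd (c := M ^ 2) (by fun_prop) (ae_of_all _ hff)
  have i6 : Integrable (fun t => f t ^ 2 + 2 * (t * (f t * f' t)) - (v : ℝ)⁻¹ * (t ^ 2 * f t ^ 2)) γ :=
    (i1.add (i4.const_mul 2)).sub (i3.const_mul _)
  have key : ∀ g : ℝ → ℝ, Integrable g γ →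
      Integrable (fun t => ProbabilityTheory.gaussianPDFReal 0 v t * g t) := by
    intro g hg
    rw [hγ, ProbabilityTheory.gaussianReal_of_var_ne_zero _ hv,
      integrable_withDensity_iff_integrable_smul' (ProbabilityTheory.measurable_gaussianPDF _ _)
      (ae_of_all _ fun _ ↦ ProbabilityTheory.gaussianPDF_lt_top)] at hg
    simpa using hg
  have hp : ∀ t, HasDerivAt (ProbabilityTheory.gaussianPDFReal 0 v)
      (ProbabilityTheory.gaussianPDFReal 0 v t * (-(v : ℝ)⁻¹ * t)) t := by
    intro t
    rw [ProbabilityTheory.gaussianPDFReal_def]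
    have h1 : HasDerivAt (fun x : ℝ => -(x - 0) ^ 2 / (2 * v)) (-(v : ℝ)⁻¹ * t) t := by
      have := ((((hasDerivAt_id t).sub_const 0).pow 2).neg).div_const (2 * (v : ℝ))
      refine this.congr_deriv ?_
      simp
      field_simp
    refine (h1.exp.const_mul _).congr_deriv ?_
    ring
  have hz : ∫ t, (f t ^ 2 + 2 * (t * (f t * f' t)) - (v : ℝ)⁻¹ * (t ^ 2 * f t ^ 2)) ∂γ = 0 := by
    rw [hγ, ProbabilityTheory.integral_gaussianReal_eq_integral_smul hv]
    refine integral_eq_zero_of_hasDerivAt_of_integrable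
      (f := fun t => ProbabilityTheory.gaussianPDFReal 0 v t * (t * f t ^ 2)) ?_ (key _ i6) (key _ i5)
    intro t
    refine ((hp t).mul ((hasDerivAt_id t).mul ((hf t).pow 2))).congr_deriv ?_
    simp
    ring
  have : ∫ t, (t ^ 2 * f t ^ 2 - 2 * v * f t ^ 2 - 4 * v ^ 2 * f' t ^ 2) ∂γ ≤
      ∫ t, (-2 * v) * (f t ^ 2 + 2 * (t * (f t * f' t)) - (v : ℝ)⁻¹ * (t ^ 2 * f t ^ 2)) ∂γ := by
    refine integral_mono ((i3.sub (i1.const_mul _)).sub (i2.const_mul _)) (i6.const_mul _) ?_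
    intro t
    have : (-2 * v) * (f t ^ 2 + 2 * (t * (f t * f' t)) - (v : ℝ)⁻¹ * (t ^ 2 * f t ^ 2)) =
      -2 * v * f t ^ 2 - 4 * v * t * f t * f' t + 2 * (t ^ 2 * f t ^ 2) := by
      field_simp
      ring
    simp only [this]
    nlinarith [sq_nonneg (t * f t - 2 * v * f' t)]
  rw [integral_const_mul, hz, mul_zero] at this
  exact this

lemma aux_charFun {H : Type*} [NormedAddCommGroup H] [InnerProductSpace ℝ H]
    [MeasurableSpace H] [BorelSpace H] [SecondCountableTopology H]
    (μ : Measure H) (h : H) (w : ℝ) (hw : 0 ≤ w)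
    (hG : Measure.map (fun x => ⟪h, x⟫) μ = ProbabilityTheory.gaussianReal 0 w.toNNReal) :
    charFun μ h = Complex.exp (-(w / 2 : ℝ)) := by
  have h1 := ProbabilityTheory.charFun_gaussianReal (μ := 0) (v := w.toNNReal) 1
  rw [← hG, charFun_apply_real, integral_map (by fun_prop) (by fun_prop)] at h1
  rw [charFun_apply]
  simp only [real_inner_comm h]
  simp only [Complex.ofReal_one, one_mul] at h1
  rw [h1]
  simp [Real.coe_toNNReal _ hw]

lemma aux_decomp {H : Type*} [NormedAddCommGroup H] [InnerProductSpace ℝ H] [CompleteSpace H]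
    [MeasurableSpace H] [BorelSpace H] [SecondCountableTopology H]
    (μ : Measure H) [IsProbabilityMeasure μ]
    (e : ℕ → H) (hON : Orthonormal ℝ e)
    (lam : ℕ → ℝ) (hlampos : ∀ k, 0 < lam k) (hsum : Summable lam)
    (hGauss : ∀ h : H, Measure.map (fun x => ⟪h, x⟫) μ
      = ProbabilityTheory.gaussianReal 0 (Real.toNNReal (∑' k, lam k * ⟪h, e k⟫ ^ 2))) (k : ℕ) :
    (μ.prod (ProbabilityTheory.gaussianReal 0 (lam k).toNNReal)).map
      (fun p : H × ℝ => p.1 - ⟪e k, p.1⟫ • e k + p.2 • e k) = μ := by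
  have hS : ∀ h : H, Summable fun j => lam j * ⟪h, e j⟫ ^ 2 := by
    intro h
    refine Summable.of_nonneg_of_le (fun j => by have := (hlampos j).le; positivity) (fun j => ?_)
      (hsum.mul_right (‖h‖ ^ 2))
    refine mul_le_mul_of_nonneg_left ?_ (hlampos j).le
    have := abs_real_inner_le_norm h (e j)
    rw [hON.1 j, mul_one] at this
    rw [← sq_abs]
    exact pow_le_pow_left₀ (abs_nonneg _) this 2
  have hn : ∀ h : H, 0 ≤ ∑' j, lam j * ⟪h, e j⟫ ^ 2 := fun h =>
    tsum_nonneg fun j => by have := (hlampos j).le; positivity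
  have hT : Continuous (fun p : H × ℝ => p.1 - ⟪e k, p.1⟫ • e k + p.2 • e k) := by fun_prop
  have : IsProbabilityMeasure ((μ.prod (ProbabilityTheory.gaussianReal 0 (lam k).toNNReal)).map
      (fun p : H × ℝ => p.1 - ⟪e k, p.1⟫ • e k + p.2 • e k)) :=
    Measure.isProbabilityMeasure_map hT.aemeasurable
  refine Measure.ext_of_charFun ?_
  ext h
  rw [aux_charFun μ h _ (hn h) (hGauss h), charFun_apply, integral_map hT.aemeasurable
    (by fun_prop)]
  have e1 : ∀ p : H × ℝ, Complex.exp ((⟪p.1 - ⟪e k, p.1⟫ • e k + p.2 • e k, h⟫ : ℝ) * Complex.I) =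
     Complex.exp ((⟪p.1, h - ⟪h, e k⟫ • e k⟫ : ℝ) * Complex.I) *
       Complex.exp (((⟪h, e k⟫ : ℝ) : ℂ) * (p.2 : ℂ) * Complex.I) := by
    intro p
    rw [← Complex.exp_add, ← add_mul, ← Complex.ofReal_mul, ← Complex.ofReal_add]
    congr 4
    simp only [inner_add_left, inner_sub_left, inner_sub_right, inner_smul_left, inner_smul_right,
      real_inner_comm h (e k), real_inner_comm p.1 (e k)]
    simp
    ring
  simp_rw [e1]
  rw [integral_prod_mul (μ := μ) (ν := ProbabilityTheory.gaussianReal 0 (lam k).toNNReal)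
    (fun x => Complex.exp ((⟪x, h - ⟪h, e k⟫ • e k⟫ : ℝ) * Complex.I))
    (fun t : ℝ => Complex.exp (((⟪h, e k⟫ : ℝ) : ℂ) * (t : ℂ) * Complex.I)),
    ← charFun_apply_real, ← charFun_apply, ProbabilityTheory.charFun_gaussianReal,
    aux_charFun μ _ _ (hn _) (hGauss _), ← Complex.exp_add]
  have e2 : ∑' j, lam j * ⟪h, e j⟫ ^ 2 = lam k * ⟪h, e k⟫ ^ 2 +
      ∑' j, lam j * ⟪h - ⟪h, e k⟫ • e k, e j⟫ ^ 2 := by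
    rw [(hS h).tsum_eq_add_tsum_ite k]
    congr 2
    ext j
    rw [inner_sub_left, inner_smul_left, orthonormal_iff_ite.1 hON]
    by_cases hj : j = k
    · simp [hj]
    · simp [hj, Ne.symm hj]
  rw [e2]
  congr 1
  rw [Real.coe_toNNReal _ (hlampos k).le]
  push_cast
  ring

theorem stmt_12
    {H : Type*} [NormedAddCommGroup H] [InnerProductSpace ℝ H] [CompleteSpace H]
    [MeasurableSpace H] [BorelSpace H] [SecondCountableTopology H]
    (μ : Measure H) [IsProbabilityMeasure μ]
    (e : ℕ → H) (hON : Orthonormal ℝ e)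
    (htotal : (Submodule.span ℝ (Set.range e)).topologicalClosure = ⊤)
    (lam : ℕ → ℝ) (hlampos : ∀ k, 0 < lam k) (hsum : Summable lam)
    (hGauss : ∀ h : H, Measure.map (fun x => ⟪h, x⟫) μ
      = ProbabilityTheory.gaussianReal 0 (Real.toNNReal (∑' k, lam k * ⟪h, e k⟫ ^ 2))) :
    ∃ C > 0, ∀ φ : H → ℝ, ContDiff ℝ 1 φ →
      (∃ M, ∀ x, |φ x| ≤ M) → (∃ M, ∀ x, ‖fderiv ℝ φ x‖ ≤ M) →
      ∫ x, ‖x‖ ^ 2 * (φ x) ^ 2 ∂μ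
        ≤ C * (∫ x, (φ x) ^ 2 ∂μ + ∫ x, ∑' k, lam k * (fderiv ℝ φ x (e k)) ^ 2 ∂μ) := by
  have hLpos : 0 < ∑' k, lam k := hsum.tsum_pos (fun k => (hlampos k).le) 0 (hlampos 0)
  have hle : ∀ k, lam k ≤ ∑' k, lam k := fun k => hsum.le_tsum k fun j _ => (hlampos j).le
  refine ⟨4 * ∑' k, lam k, by positivity, ?_⟩
  rintro φ hφ ⟨M, hM⟩ ⟨N, hN⟩
  have hφc : Continuous φ := hφ.continuous
  have hDc : ∀ k, Continuous fun x => fderiv ℝ φ x (e k) := fun k =>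
    (hφ.continuous_fderiv one_ne_zero).clm_apply continuous_const
  have hDb : ∀ k x, |fderiv ℝ φ x (e k)| ≤ N := fun k x => by
    have := (fderiv ℝ φ x).le_opNorm (e k)
    rw [hON.1 k, mul_one] at this
    exact this.trans (hN x)
  have bφ : ∀ x, ‖φ x ^ 2‖ ≤ M ^ 2 := fun x => by
    rw [norm_pow]; exact pow_le_pow_left₀ (norm_nonneg _) (hM x) 2
  have bD : ∀ k x, ‖fderiv ℝ φ x (e k) ^ 2‖ ≤ N ^ 2 := fun k x => by
    rw [norm_pow]; exact pow_le_pow_left₀ (norm_nonneg _) (hDb k x) 2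
  have iφ : Integrable (fun x => φ x ^ 2) μ :=
    Integrable.of_bound (by fun_prop) (M ^ 2) (ae_of_all _ bφ)
  have iD : ∀ k, Integrable (fun x => fderiv ℝ φ x (e k) ^ 2) μ := fun k =>
    Integrable.of_bound ((hDc k).pow 2).aestronglyMeasurable (N ^ 2) (ae_of_all _ (bD k))
  have ix : ∀ k, Integrable (fun x => ⟪e k, x⟫ ^ 2) μ := fun k => by
    have h1 : Integrable (fun t : ℝ => t ^ 2) (Measure.map (fun x => ⟪e k, x⟫) μ) := by
      rw [hGauss]
      exact (ProbabilityTheory.memLp_id_gaussianReal 2).integrable_sq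
    exact h1.comp_measurable (by fun_prop)
  have ixφ : ∀ k, Integrable (fun x => ⟪e k, x⟫ ^ 2 * φ x ^ 2) μ := fun k =>
    (ix k).mul_bdd (c := M ^ 2) (by fun_prop) (ae_of_all _ bφ)
  have main : ∀ k, ∫ x, ⟪e k, x⟫ ^ 2 * φ x ^ 2 ∂μ ≤
      2 * lam k * ∫ x, φ x ^ 2 ∂μ + 4 * lam k ^ 2 * ∫ x, fderiv ℝ φ x (e k) ^ 2 ∂μ := by
    intro k
    have iG : Integrable (fun x => ⟪e k, x⟫ ^ 2 * φ x ^ 2 - 2 * lam k * φ x ^ 2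
        - 4 * lam k ^ 2 * fderiv ℝ φ x (e k) ^ 2) μ :=
      ((ixφ k).sub (iφ.const_mul _)).sub ((iD k).const_mul _)
    have hT : Continuous (fun p : H × ℝ => p.1 - ⟪e k, p.1⟫ • e k + p.2 • e k) := by fun_prop
    have hd := aux_decomp μ e hON lam hlampos hsum hGauss k
    have hneg : ∫ x, (⟪e k, x⟫ ^ 2 * φ x ^ 2 - 2 * lam k * φ x ^ 2
        - 4 * lam k ^ 2 * fderiv ℝ φ x (e k) ^ 2) ∂μ ≤ 0 := by
      have iG' := iG
      rw [← hd] at iG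
      rw [← hd, integral_map hT.aemeasurable iG.1]
      have iP := iG.comp_measurable hT.measurable
      have := integral_prod _ iP
      simp only [Function.comp_def] at this
      rw [this]
      refine integral_nonpos fun y => ?_
      have hv : (lam k).toNNReal ≠ 0 := by simpa using hlampos k
      have h1 := aux_gauss1d (lam k).toNNReal hv
        (fun t => φ (y - ⟪e k, y⟫ • e k + t • e k))
        (fun t => fderiv ℝ φ (y - ⟪e k, y⟫ • e k + t • e k) (e k))
        (fun t => by
          have hl : HasDerivAt (fun t : ℝ => y - ⟪e k, y⟫ • e k + t • e k) (e k) t := by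
            simpa using ((hasDerivAt_id t).smul_const (e k)).const_add (y - ⟪e k, y⟫ • e k)
          exact ((hφ.differentiable one_ne_zero _).hasFDerivAt).comp_hasDerivAt t hl)
        ((hDc k).comp (by fun_prop)) M (fun t => hM _) N (fun t => hDb k _)
      have hin : ∀ t : ℝ, ⟪e k, y - ⟪e k, y⟫ • e k + t • e k⟫ = t := fun t => by
        simp [inner_add_right, inner_sub_right, inner_smul_right, hON.1 k]
      simp only [hin, Pi.zero_apply]
      simpa only [Real.coe_toNNReal _ (hlampos k).le] using h1
    have j1 : Integrable (fun x => ⟪e k, x⟫ ^ 2 * φ x ^ 2 - 2 * lam k * φ x ^ 2) μ :=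
      (ixφ k).sub (iφ.const_mul _)
    rw [integral_sub j1 ((iD k).const_mul _),
      integral_sub (ixφ k) (iφ.const_mul _), integral_const_mul, integral_const_mul] at hneg
    linarith
  -- sum
  let b : HilbertBasis ℕ ℝ H := HilbertBasis.mk hON htotal.ge
  have hpars : ∀ x : H, HasSum (fun k => ⟪e k, x⟫ ^ 2) (‖x‖ ^ 2) := fun x => by
    have := b.hasSum_inner_mul_inner x x
    simp only [b, HilbertBasis.coe_mk, real_inner_self_eq_norm_sq] at this
    have h2 : (fun k => ⟪e k, x⟫ ^ 2) = fun i => ⟪x, e i⟫ * ⟪e i, x⟫ := by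
      ext i
      rw [real_inner_comm x (e i), sq]
    rw [h2]
    exact this
  have hDn : ∀ k, 0 ≤ ∫ x, fderiv ℝ φ x (e k) ^ 2 ∂μ := fun k =>
    integral_nonneg fun x => sq_nonneg _
  have hφn : 0 ≤ ∫ x, φ x ^ 2 ∂μ := integral_nonneg fun x => sq_nonneg _
  have hDI : ∀ k, ∫ x, fderiv ℝ φ x (e k) ^ 2 ∂μ ≤ N ^ 2 := fun k => by
    have := integral_mono (iD k) (integrable_const (N ^ 2)) (fun x => (le_abs_self _).trans (bD k x))
    simpa using this
  have sD : Summable fun k => lam k * ∫ x, fderiv ℝ φ x (e k) ^ 2 ∂μ :=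
    Summable.of_nonneg_of_le (fun k => mul_nonneg (hlampos k).le (hDn k))
      (fun k => mul_le_mul_of_nonneg_left (hDI k) (hlampos k).le) (hsum.mul_right _)
  have main2 : ∀ k, ∫ x, ⟪e k, x⟫ ^ 2 * φ x ^ 2 ∂μ ≤
      2 * (lam k * ∫ x, φ x ^ 2 ∂μ) +
       4 * (∑' k, lam k) * (lam k * ∫ x, fderiv ℝ φ x (e k) ^ 2 ∂μ) := fun k => by
    have h1 := mul_le_mul_of_nonneg_right (hle k) (mul_nonneg (hlampos k).le (hDn k))
    nlinarith [main k]
  have sR := ((hsum.mul_right (∫ x, φ x ^ 2 ∂μ)).mul_left 2).add (sD.mul_left (4 * ∑' k, lam k))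
  have sL : Summable fun k => ∫ x, ⟪e k, x⟫ ^ 2 * φ x ^ 2 ∂μ :=
    Summable.of_nonneg_of_le (fun k => integral_nonneg fun x => by positivity) main2 sR
  have eL : ∫ x, ‖x‖ ^ 2 * (φ x) ^ 2 ∂μ = ∑' k, ∫ x, ⟪e k, x⟫ ^ 2 * φ x ^ 2 ∂μ := by
    rw [integral_tsum_of_summable_integral_norm ixφ]
    · refine integral_congr_ae (ae_of_all _ fun x => ?_)
      exact ((hpars x).mul_right _).tsum_eq.symm
    · refine sL.congr fun k => integral_congr_ae (ae_of_all _ fun x => ?_)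
      exact (Real.norm_of_nonneg (by positivity)).symm
  have eD : ∫ x, ∑' k, lam k * (fderiv ℝ φ x (e k)) ^ 2 ∂μ =
      ∑' k, lam k * ∫ x, fderiv ℝ φ x (e k) ^ 2 ∂μ := by
    rw [← integral_tsum_of_summable_integral_norm (fun k => (iD k).const_mul _)]
    · simp only [integral_const_mul]
    · refine sD.congr fun k => ?_
      rw [← integral_const_mul]
      refine integral_congr_ae (ae_of_all _ fun x => ?_)
      exact (Real.norm_of_nonneg (mul_nonneg (hlampos k).le (sq_nonneg _))).symm
  rw [eL, eD]
  refine (sL.tsum_le_tsum main2 sR).trans ?_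
  rw [((hsum.mul_right (∫ x, φ x ^ 2 ∂μ)).mul_left 2).tsum_add (sD.mul_left (4 * ∑' k, lam k)),
    tsum_mul_left, tsum_mul_left, tsum_mul_right]
  nlinarith [mul_nonneg hLpos.le hφn]
end

section
/- Let μ be a finite Borel measure on ℝ. Suppose there exists C > 0 such that |∫_ℝ φ'(r) μ(dr)| ≤ C‖φ‖_∞ for all φ ∈ C¹_b(ℝ). Then μ is absolutely continuous with respect to Lebesgue measure, with density of bounded variation bounded by C. -/
open MeasureTheory

open Set Filter Topology

/-- the standing hypothesis -/
def HB (μ : Measure ℝ) (C : ℝ) : Prop := ∀ φ : ℝ → ℝ, ContDiff ℝ 1 φ →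
      (∃ M', ∀ x, |deriv φ x| ≤ M') →
      ∀ M : ℝ, (∀ x, |φ x| ≤ M) → |∫ x, deriv φ x ∂μ| ≤ C * M

theorem HB_of_hasDerivAt {μ : Measure ℝ} {C : ℝ} (h : HB μ C) {φ ψ : ℝ → ℝ}
    (hd : ∀ x, HasDerivAt φ (ψ x) x) (hψ : Continuous ψ) (M' : ℝ) (hM' : ∀ x, |ψ x| ≤ M')
    (M : ℝ) (hM : ∀ x, |φ x| ≤ M) : |∫ x, ψ x ∂μ| ≤ C * M := by
  have e : deriv φ = ψ := funext fun x => (hd x).deriv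
  have := h φ (contDiff_one_iff_deriv.2 ⟨fun x => (hd x).differentiableAt, e ▸ hψ⟩)
    ⟨M', by rw [e]; exact hM'⟩ M hM
  rwa [e] at this

theorem itv_le {g : ℝ → ℝ} (g0 : ∀ x, 0 ≤ g x) (gi : Integrable g) {a b : ℝ} (hab : a ≤ b) :
    ∫ s in a..b, g s ≤ ∫ s, g s := by
  rw [intervalIntegral.integral_of_le hab]
  exact setIntegral_le_integral gi (ae_of_all _ g0)

theorem itv_nonneg {g : ℝ → ℝ} (g0 : ∀ x, 0 ≤ g x) {a b : ℝ} (hab : a ≤ b) :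
    0 ≤ ∫ s in a..b, g s := intervalIntegral.integral_nonneg hab (fun x _ => g0 x)

theorem int_le {μ : Measure ℝ} {C : ℝ} (h : HB μ C) {g : ℝ → ℝ} (gc : Continuous g)
    (g0 : ∀ x, 0 ≤ g x) (g1 : ∀ x, g x ≤ 1) (gi : Integrable g) :
    ∫ x, g x ∂μ ≤ C * ∫ x, g x := by
  refine (le_abs_self _).trans (HB_of_hasDerivAt h (φ := fun t => ∫ s in (0:ℝ)..t, g s)
    (fun x => gc.integral_hasStrictDerivAt 0 x |>.hasDerivAt) gc 1
    (fun x => by rw [abs_of_nonneg (g0 x)]; exact g1 x) _ ?_)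
  intro x
  rcases le_total 0 x with hx | hx
  · rw [abs_of_nonneg (itv_nonneg g0 hx)]; exact itv_le g0 gi hx
  · rw [intervalIntegral.integral_symm, abs_neg, abs_of_nonneg (itv_nonneg g0 hx)]
    exact itv_le g0 gi hx

theorem var_le {μ : Measure ℝ} [IsFiniteMeasure μ] {C : ℝ} (h : HB μ C) {g : ℝ → ℝ}
    (gc : Continuous g)
    (g0 : ∀ x, 0 ≤ g x) (g1 : ∀ x, g x ≤ 1) (gi : Integrable g) (u : ℕ → ℝ) (hu : Monotone u)
    (n : ℕ) :
    ∑ i ∈ Finset.range n, |(∫ t, g (t - u (i+1)) ∂μ) - ∫ t, g (t - u i) ∂μ| ≤ C * ∫ x, g x := by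
  have hint : ∀ c, Integrable (fun t => g (t - c)) μ := fun c =>
    Integrable.of_bound (by fun_prop) 1 (ae_of_all _ fun t => by
      rw [Real.norm_eq_abs, abs_of_nonneg (g0 _)]; exact g1 _)
  obtain ⟨e, he1, he⟩ : ∃ e : ℕ → ℝ, (∀ i, |e i| ≤ 1) ∧ ∀ i,
      e i * ((∫ t, g (t - u (i+1)) ∂μ) - ∫ t, g (t - u i) ∂μ)
        = |(∫ t, g (t - u (i+1)) ∂μ) - ∫ t, g (t - u i) ∂μ| := by
    have : ∀ a : ℝ, ∃ e : ℝ, |e| ≤ 1 ∧ e * a = |a| := by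
      intro a
      rcases le_total 0 a with ha | ha
      · exact ⟨1, by simp, by simp [abs_of_nonneg ha]⟩
      · exact ⟨-1, by simp, by simp [abs_of_nonpos ha]⟩
    choose e he using fun i => this ((∫ t, g (t - u (i+1)) ∂μ) - ∫ t, g (t - u i) ∂μ)
    exact ⟨e, fun i => (he i).1, fun i => (he i).2⟩
  set G : ℝ → ℝ := fun t => ∫ s in (0:ℝ)..t, g s with hG
  have hGd : ∀ x, HasDerivAt G (g x) x :=
    fun x => gc.integral_hasStrictDerivAt 0 x |>.hasDerivAt
  have hGs : ∀ a b, G b - G a = ∫ s in a..b, g s := fun a b =>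
    intervalIntegral.integral_interval_sub_left (gc.intervalIntegrable _ _)
      (gc.intervalIntegrable _ _)
  have key := HB_of_hasDerivAt h
    (φ := fun t => ∑ i ∈ Finset.range n, e i * (G (t - u (i+1)) - G (t - u i)))
    (ψ := fun t => ∑ i ∈ Finset.range n, e i * (g (t - u (i+1)) - g (t - u i)))
    (fun x => HasDerivAt.fun_sum fun i _ =>
      (((hGd _).comp_sub_const x _).sub ((hGd _).comp_sub_const x _)).const_mul (e i))
    (by fun_prop) n ?_ (∫ x, g x) ?_
  · refine le_trans (le_of_eq ?_) ((le_abs_self _).trans key)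
    have hi : ∀ i, Integrable (fun t => e i * (g (t - u (i+1)) - g (t - u i))) μ :=
      fun i => ((hint _).sub (hint _)).const_mul _
    rw [integral_finsetSum _ (fun i _ => hi i)]
    refine Finset.sum_congr rfl fun i _ => ?_
    rw [integral_const_mul, integral_sub (hint _) (hint _), he]
  · intro x
    refine (Finset.abs_sum_le_sum_abs _ _).trans ?_
    refine (Finset.sum_le_sum (g := fun _ => (1:ℝ)) fun i _ => ?_).trans (by simp)
    rw [abs_mul]
    refine mul_le_one₀ (he1 i) (abs_nonneg _) (abs_sub_le_iff.2 ⟨?_, ?_⟩)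
    · linarith [g1 (x - u (i+1)), g0 (x - u i)]
    · linarith [g0 (x - u (i+1)), g1 (x - u i)]
  · intro x
    refine (Finset.abs_sum_le_sum_abs _ _).trans ?_
    have : ∀ i ∈ Finset.range n, |e i * (G (x - u (i+1)) - G (x - u i))|
        ≤ G (x - u i) - G (x - u (i+1)) := by
      intro i _
      have h0 : 0 ≤ G (x - u i) - G (x - u (i+1)) := by
        rw [hGs]; exact itv_nonneg g0 (by linarith [hu (Nat.le_succ i)])
      rw [abs_mul, abs_sub_comm, abs_of_nonneg h0]
      exact mul_le_of_le_one_left h0 (he1 i)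
    refine (Finset.sum_le_sum this).trans ?_
    rw [Finset.sum_range_sub' (fun i => G (x - u i)), hGs]
    exact itv_le g0 gi (by linarith [hu (Nat.zero_le n)])

/-- approximating functions -/
noncomputable def gm (K : Set ℝ) (m : ℕ) (s : ℝ) : ℝ := max 0 (1 - (m+1) * Metric.infDist s K)

theorem gm_cont (K : Set ℝ) (m : ℕ) : Continuous (gm K m) := by
  have := Metric.continuous_infDist_pt K
  unfold gm; fun_prop
theorem gm_nonneg (K : Set ℝ) (m : ℕ) (s : ℝ) : 0 ≤ gm K m s := le_max_left _ _
theorem gm_le_one (K : Set ℝ) (m : ℕ) (s : ℝ) : gm K m s ≤ 1 := by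
  have := Metric.infDist_nonneg (x := s) (s := K)
  refine max_le zero_le_one ?_
  have : 0 ≤ ((m:ℝ)+1) * Metric.infDist s K := by positivity
  linarith
theorem gm_le (K : Set ℝ) (m : ℕ) (s : ℝ) : gm K m s ≤ gm K 0 s := by
  have := Metric.infDist_nonneg (x := s) (s := K)
  unfold gm
  gcongr
  simp
theorem gm_int {K : Set ℝ} (hK : IsCompact K) (hne : K.Nonempty) (m : ℕ) :
    Integrable (gm K m) := by
  refine (gm_cont K m).integrable_of_hasCompactSupport ?_
  refine HasCompactSupport.of_support_subset_isCompact (hK.cthickening (r := 1)) ?_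
  intro s hs
  by_contra hc0
  have hc : 1 < Metric.infDist s K := by
    by_contra hle
    rw [not_lt] at hle
    obtain ⟨y, hy, hyd⟩ := hK.exists_infDist_eq_dist hne s
    exact hc0 (Metric.mem_cthickening_of_dist_le s y 1 K hy (hyd ▸ hle))
  apply hs
  unfold gm
  refine max_eq_left ?_
  have : (0:ℝ) ≤ m := by positivity
  nlinarith
theorem gm_tendsto {K : Set ℝ} (hK : IsCompact K) (hne : K.Nonempty) (s : ℝ) :
    Tendsto (fun m => gm K m s) atTop (𝓝 (K.indicator 1 s)) := by
  by_cases hs : s ∈ K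
  · simp [gm, hs, Metric.infDist_zero_of_mem hs]
  · have h0 := (hK.isClosed.notMem_iff_infDist_pos hne).1 hs
    rw [indicator_of_notMem hs]
    refine tendsto_const_nhds.congr' ?_
    obtain ⟨N, hN⟩ := exists_nat_gt (1 / Metric.infDist s K)
    filter_upwards [eventually_ge_atTop N] with m hm
    have : (N:ℝ) ≤ m := by exact_mod_cast hm
    rw [div_lt_iff₀ h0] at hN
    unfold gm
    refine (max_eq_left ?_).symm
    nlinarith

theorem gm_lim_vol {K : Set ℝ} (hK : IsCompact K) (hne : K.Nonempty) :
    Tendsto (fun m => ∫ s, gm K m s) atTop (𝓝 (volume.real K)) := by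
  rw [← integral_indicator_one hK.measurableSet]
  refine tendsto_integral_of_dominated_convergence (gm K 0)
    (fun m => (gm_cont K m).aestronglyMeasurable) (gm_int hK hne 0)
    (fun m => ae_of_all _ fun s => ?_) (ae_of_all _ (gm_tendsto hK hne))
  rw [Real.norm_eq_abs, abs_of_nonneg (gm_nonneg _ _ _)]; exact gm_le K m s

theorem gm_lim_mu {μ : Measure ℝ} [IsFiniteMeasure μ] {K : Set ℝ} (hK : IsCompact K)
    (hne : K.Nonempty) (x : ℝ) :
    Tendsto (fun m => ∫ s, gm K m (s - x) ∂μ) atTop (𝓝 (μ.real ((fun s => s - x) ⁻¹' K))) := by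
  rw [← integral_indicator_one (hK.measurableSet.preimage (by fun_prop))]
  refine tendsto_integral_of_dominated_convergence (fun _ => 1)
    (fun m => ((gm_cont K m).comp (by fun_prop)).aestronglyMeasurable) (integrable_const _)
    (fun m => ae_of_all _ fun s => ?_) (ae_of_all _ fun s => gm_tendsto hK hne (s - x))
  rw [Real.norm_eq_abs, abs_of_nonneg (gm_nonneg _ _ _)]; exact gm_le_one K m _

theorem K_le {μ : Measure ℝ} [IsFiniteMeasure μ] {C : ℝ} (h : HB μ C) {K : Set ℝ}
    (hK : IsCompact K) (hne : K.Nonempty) : μ.real K ≤ C * volume.real K := by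
  have := gm_lim_mu (μ := μ) hK hne 0
  simp only [sub_zero, preimage_id'] at this
  exact le_of_tendsto_of_tendsto' this ((gm_lim_vol hK hne).const_mul C) fun m =>
    int_le h (gm_cont K m) (gm_nonneg K m) (gm_le_one K m) (gm_int hK hne m)

theorem K_var {μ : Measure ℝ} [IsFiniteMeasure μ] {C : ℝ} (h : HB μ C) {r : ℝ} (hr : 0 < r)
    (u : ℕ → ℝ) (hu : Monotone u) (n : ℕ) :
    ∑ i ∈ Finset.range n, |μ.real (Metric.closedBall (u (i+1)) r)
      - μ.real (Metric.closedBall (u i) r)| ≤ C * (2 * r) := by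
  have hK : IsCompact (Metric.closedBall (0:ℝ) r) := isCompact_closedBall _ _
  have hne : (Metric.closedBall (0:ℝ) r).Nonempty := ⟨0, by simp [hr.le]⟩
  have e : ∀ x : ℝ, (fun s => s - x) ⁻¹' (Metric.closedBall (0:ℝ) r) = Metric.closedBall x r := by
    intro x; ext s; simp [Real.dist_eq]
  have hl : ∀ x, Tendsto (fun m => ∫ s, gm (Metric.closedBall (0:ℝ) r) m (s - x) ∂μ) atTop
      (𝓝 (μ.real (Metric.closedBall x r))) := fun x => by
    rw [← e x]; exact gm_lim_mu (μ := μ) hK hne x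
  have hv := gm_lim_vol hK hne
  have ev : volume.real (Metric.closedBall (0:ℝ) r) = 2 * r := by
    rw [measureReal_def, Real.volume_closedBall, ENNReal.toReal_ofReal (by linarith)]
  rw [ev] at hv
  exact le_of_tendsto_of_tendsto'
    (tendsto_finsetSum _ fun i _ => ((hl (u (i+1))).sub (hl (u i))).abs) (hv.const_mul C) fun m =>
    var_le h (gm_cont _ m) (gm_nonneg _ m) (gm_le_one _ m) (gm_int hK hne m) u hu n

theorem ac_of {μ : Measure ℝ} [IsFiniteMeasure μ] {C : ℝ} (h : HB μ C) : μ ≪ volume := by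
  refine Measure.AbsolutelyContinuous.mk fun s hs h0 => ?_
  rw [hs.measure_eq_iSup_isCompact]
  simp only [ENNReal.iSup_eq_zero]
  intro K hKs hK
  rcases K.eq_empty_or_nonempty with rfl | hne
  · simp
  have := K_le h hK hne
  rw [measureReal_def volume, measure_mono_null hKs h0] at this
  simp only [ENNReal.toReal_zero, mul_zero] at this
  exact (measureReal_eq_zero_iff).1 (le_antisymm this measureReal_nonneg)

/-- if a finite Borel measure `μ` on `ℝ` satisfies
`|∫ φ' dμ| ≤ C‖φ‖_∞` for all `φ ∈ C¹_b(ℝ)`, then `μ` is absolutely continuous with respect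
to Lebesgue measure, with a nonnegative density `k` of bounded variation, bounded by `C`,
and with total variation at most `C`. -/
theorem stmt_18
    (μ : Measure ℝ) [IsFiniteMeasure μ]
    (C : ℝ) (hC : 0 < C)
    (hbound : ∀ φ : ℝ → ℝ, ContDiff ℝ 1 φ →
      (∃ M', ∀ x, |deriv φ x| ≤ M') →
      ∀ M : ℝ, (∀ x, |φ x| ≤ M) → |∫ x, deriv φ x ∂μ| ≤ C * M) :
    μ ≪ volume ∧
    ∃ k : ℝ → ℝ, (∀ x, 0 ≤ k x) ∧ (∀ x, k x ≤ C) ∧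
      eVariationOn k Set.univ ≤ ENNReal.ofReal C ∧
      μ = volume.withDensity (fun x => ENNReal.ofReal (k x)) := by
  have h : HB μ C := hbound
  have hac := ac_of h
  refine ⟨hac, ?_⟩
  obtain ⟨U, hU⟩ := Ultrafilter.exists_le (𝓝[>] (0:ℝ))
  have hpos : ∀ᶠ r in (U : Filter ℝ), 0 < r := hU self_mem_nhdsWithin
  set F : ℝ → ℝ → ℝ := fun r x => μ.real (Metric.closedBall x r) / (2 * r) with hF
  have hFm : ∀ x r, 0 < r → F r x ∈ Icc 0 C := by
    intro x r hr
    have h2 : 0 < 2 * r := by linarith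
    refine ⟨by simp only [hF]; positivity, ?_⟩
    have := K_le h (isCompact_closedBall x r) ⟨x, by simp [hr.le]⟩
    rw [measureReal_def volume, Real.volume_closedBall, ENNReal.toReal_ofReal h2.le] at this
    simp only [hF]
    rwa [div_le_iff₀ h2]
  have hlim : ∀ x, ∃ y ∈ Icc 0 C, Tendsto (fun r => F r x) U (𝓝 y) := by
    intro x
    obtain ⟨y, hy, hy'⟩ := (isCompact_Icc (a := (0:ℝ)) (b := C)).ultrafilter_le_nhds
      (U.map fun r => F r x) (by
        rw [le_principal_iff]
        exact hpos.mono fun r hr => hFm x r hr)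
    exact ⟨y, hy, hy'⟩
  choose k hk hkl using hlim
  refine ⟨k, fun x => (hk x).1, fun x => (hk x).2, ?_, ?_⟩
  · by_contra hc
    rw [not_le] at hc
    have hev := eVariationOn.lowerSemicontinuous_aux (F := F) (p := (U : Filter ℝ)) (f := k)
      (fun x _ => hkl x) hc
    obtain ⟨r, hr1, hr⟩ := (hev.and hpos).exists
    refine absurd hr1 (not_lt.2 ?_)
    refine iSup_le ?_
    rintro ⟨n, u, hu, -⟩
    simp only [edist_dist]
    rw [← ENNReal.ofReal_sum_of_nonneg (fun _ _ => dist_nonneg)]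
    refine ENNReal.ofReal_le_ofReal ?_
    have h2 : 0 < 2 * r := by linarith
    have := K_var h hr u hu n
    rw [← div_le_iff₀ h2, Finset.sum_div] at this
    refine le_trans (le_of_eq (Finset.sum_congr rfl fun i _ => ?_)) this
    simp only [hF]
    rw [Real.dist_eq, ← sub_div, abs_div, abs_of_pos h2]
  · rw [← Measure.withDensity_rnDeriv_eq μ volume hac]
    refine withDensity_congr_ae ?_
    filter_upwards [Besicovitch.ae_tendsto_rnDeriv μ volume] with x hx
    refine tendsto_nhds_unique (hx.mono_left hU) ?_
    refine ((ENNReal.continuous_ofReal.tendsto _).comp (hkl x)).congr' ?_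
    filter_upwards [hpos] with r hr
    simp only [hF, Function.comp]
    rw [ENNReal.ofReal_div_of_pos (by linarith), Real.volume_closedBall, ofReal_measureReal]
end
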